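/- On ℝ^8 with coordinates (x_1, …, x_8), consider the ℝ^6-valued one-form η_3b = Σ_{α=3}^8 η^α ⊗ e_α with η^3 = dx_3 − x_2 dx_1, η^4 = (x_1x_2 − (1/2)x_3) dx_1 − (1/2)x_1 dx_3 − (1/2) dx_4, η^5 = (1/2)x_2² dx_1 − dx_5, η^6 = (1/6)(2x_3x_1 − 3x_2x_1² + x_4) dx_1 + (1/6)x_1² dx_3 + (1/6)x_1 dx_4 + (1/3) dx_6, η^7 = (x_5 − (1/2)x_1x_2²) dx_1 − (1/2)x_3 dx_3 + x_1 dx_5 + (1/2) dx_7, and η^8 = −(1/6)x_2³ dx_1 + dx_8. Then η_3b is a six-contact form on ℝ^8: for every point x, (a) ker(η_3b)_x := {v : η^α_x(v) = 0 for α = 3,…,8} is two-dimensional, spanned by Y_1(x) = (1, 0, x_2, x_1x_2 − x_3, (1/2)x_2², (1/2)(x_1(x_1x_2 − x_3) − x_4), x_2x_3 − 2x_5, (1/6)x_2³) and Y_2(x) = (0, 1, 0, 0, 0, 0, 0, 0); (b) the joint kernel ker(dη_3b)_x := {v : dη^α_x(v,·) = 0 for α = 3,…,8} equals {v ∈ ℝ^8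 : v_1 = v_2 = 0}, which is six-dimensional; (c) ker(η_3b)_x ∩ ker(dη_3b)_x = 0. (This is the six-contact form compatible with the degree-three generalisation of the Brockett control system.) -/

import Mathlib

/-- Exterior derivative of a one-form: `dθ_x(u, v) = Dθ(x)(u)(v) − Dθ(x)(v)(u)`. -/
noncomputable def extD {E : Type*} [NormedAddCommGroup E] [NormedSpace ℝ E]
    (θ : E → (E →L[ℝ] ℝ)) (x u v : E) : ℝ :=
  fderiv ℝ θ x u v - fderiv ℝ θ x v u

/-- The coordinate projection `dx_i` on `ℝ^8` (index `i = 0, …, 7` for `x_1, …, x_8`). -/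
noncomputable def dx8 (i : Fin 8) : (Fin 8 → ℝ) →L[ℝ] ℝ := ContinuousLinearMap.proj i

/-- `η^3 = dx_3 − x_2 dx_1`. -/
noncomputable def eta3b3 : (Fin 8 → ℝ) → ((Fin 8 → ℝ) →L[ℝ] ℝ) :=
  fun x => dx8 2 - x 1 • dx8 0

/-- `η^4 = (x_1x_2 − x_3/2) dx_1 − (x_1/2) dx_3 − (1/2) dx_4`. -/
noncomputable def eta3b4 : (Fin 8 → ℝ) → ((Fin 8 → ℝ) →L[ℝ] ℝ) :=
  fun x => (x 0 * x 1 - x 2 / 2) • dx8 0 - (x 0 / 2) • dx8 2 - (1 / 2 : ℝ) • dx8 3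

/-- `η^5 = (x_2²/2) dx_1 − dx_5`. -/
noncomputable def eta3b5 : (Fin 8 → ℝ) → ((Fin 8 → ℝ) →L[ℝ] ℝ) :=
  fun x => (x 1 ^ 2 / 2) • dx8 0 - dx8 4

/-- `η^6 = (1/6)(2x_3x_1 − 3x_2x_1² + x_4) dx_1 + (x_1²/6) dx_3 + (x_1/6) dx_4 + (1/3) dx_6`. -/
noncomputable def eta3b6 : (Fin 8 → ℝ) → ((Fin 8 → ℝ) →L[ℝ] ℝ) :=
  fun x => ((2 * x 2 * x 0 - 3 * x 1 * x 0 ^ 2 + x 3) / 6) • dx8 0 +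
    (x 0 ^ 2 / 6) • dx8 2 + (x 0 / 6) • dx8 3 + (1 / 3 : ℝ) • dx8 5

/-- `η^7 = (x_5 − x_1x_2²/2) dx_1 − (x_3/2) dx_3 + x_1 dx_5 + (1/2) dx_7`. -/
noncomputable def eta3b7 : (Fin 8 → ℝ) → ((Fin 8 → ℝ) →L[ℝ] ℝ) :=
  fun x => (x 4 - x 0 * x 1 ^ 2 / 2) • dx8 0 - (x 2 / 2) • dx8 2 +
    x 0 • dx8 4 + (1 / 2 : ℝ) • dx8 6

/-- `η^8 = −(x_2³/6) dx_1 + dx_8`. -/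
noncomputable def eta3b8 : (Fin 8 → ℝ) → ((Fin 8 → ℝ) →L[ℝ] ℝ) :=
  fun x => (-(x 1 ^ 3 / 6)) • dx8 0 + dx8 7

/-- The subspace `{v ∈ ℝ^8 : v_1 = v_2 = 0}`. -/
noncomputable def K8 : Submodule ℝ (Fin 8 → ℝ) :=
  LinearMap.ker (LinearMap.proj 0 : (Fin 8 → ℝ) →ₗ[ℝ] ℝ) ⊓
    LinearMap.ker (LinearMap.proj 1 : (Fin 8 → ℝ) →ₗ[ℝ] ℝ)

/-!
Every `dη^α` is a multiple of `dx_1 ∧ dx_2`, and `dη^3` is exactly `dx_1 ∧ dx_2`, so the joint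
kernel of the `dη^α` is `ker dx_1 ∩ ker dx_2`. The equations `η^α(v) = 0` form a triangular system
for `v_3, …, v_8` in terms of `v_1`, solved by `v = v_1 Y_1 + v_2 Y_2`. Since `dx_1, dx_2` take the
values of the identity matrix on `Y_1, Y_2`, the span of `Y_1, Y_2` is a plane complementary to
`ker dx_1 ∩ ker dx_2`.
-/

/-- The exterior product `α ∧ β` of two functionals, as a function of two vectors. The functionals
enter as plain functions, so that linear maps and continuous linear maps are covered alike. -/
def wedge {R V : Type*} [Mul R] [Sub R] (α β : V → R) (u v : V) : R :=
  α u * β v - α v * β u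

section Biorthogonal

variable {R V : Type*} [CommRing R] [AddCommGroup V] [Module R V]

/-- A biorthogonal system of two functionals `α, β` and two vectors `e, f`: the matrix of values
of the functionals at the vectors is the identity. -/
structure IsDualPair (α β : V →ₗ[R] R) (e f : V) : Prop where
  left_left : α e = 1
  left_right : α f = 0
  right_left : β e = 0
  right_right : β f = 1

namespace IsDualPair

variable {α β : V →ₗ[R] R} {e f : V}

theorem mem_span_iff (h : IsDualPair α β e f) {v : V} :
    v ∈ Submodule.span R {e, f} ↔ v = α v • e + β v • f := by
  rw [Submodule.mem_span_pair]
  refine ⟨?_, fun hv => ⟨α v, β v, hv.symm⟩⟩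
  rintro ⟨a, b, rfl⟩
  simp [h.left_left, h.left_right, h.right_left, h.right_right]

theorem linearIndependent (h : IsDualPair α β e f) : LinearIndependent R ![e, f] := by
  refine LinearIndependent.pair_iff.mpr fun a b hab => ⟨?_, ?_⟩
  · simpa [h.left_left, h.left_right] using congrArg α hab
  · simpa [h.right_left, h.right_right] using congrArg β hab

theorem finrank_span [Nontrivial R] (h : IsDualPair α β e f) :
    Module.finrank R (Submodule.span R {e, f}) = 2 := by
  rw [← Matrix.range_cons_cons_empty e f ![], finrank_span_eq_card h.linearIndependent,
    Fintype.card_fin]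

theorem isCompl_span_ker (h : IsDualPair α β e f) :
    IsCompl (Submodule.span R {e, f}) (LinearMap.ker α ⊓ LinearMap.ker β) := by
  constructor
  · refine Submodule.disjoint_def.mpr fun v hspan ⟨hα, hβ⟩ => ?_
    calc v = α v • e + β v • f := h.mem_span_iff.mp hspan
      _ = 0 := by rw [LinearMap.mem_ker.mp hα, LinearMap.mem_ker.mp hβ, zero_smul, zero_smul,
        add_zero]
  · refine codisjoint_iff.mpr (eq_top_iff.mpr fun v _ => Submodule.mem_sup.mpr ?_)
    refine ⟨α v • e + β v • f, Submodule.mem_span_pair.mpr ⟨_, _, rfl⟩,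
      v - (α v • e + β v • f), ?_, add_sub_cancel _ _⟩
    simp [h.left_left, h.left_right, h.right_left, h.right_right]

theorem forall_wedge_eq_zero_iff (h : IsDualPair α β e f) {v : V} :
    (∀ u, wedge α β v u = 0) ↔ v ∈ LinearMap.ker α ⊓ LinearMap.ker β := by
  simp only [wedge, Submodule.mem_inf, LinearMap.mem_ker]
  refine ⟨fun hv => ⟨?_, ?_⟩, fun ⟨hα, hβ⟩ u => by simp [hα, hβ]⟩
  · simpa [h.left_right, h.right_right] using hv f
  · simpa [h.left_left, h.right_left] using hv e

end IsDualPair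

end Biorthogonal

section ExteriorDerivative

variable {E : Type*} [NormedAddCommGroup E] [NormedSpace ℝ E]
  {θ ω : E → E →L[ℝ] ℝ} {x : E}

theorem extD_const (ℓ : E →L[ℝ] ℝ) (x u v : E) : extD (fun _ => ℓ) x u v = 0 := by
  simp [extD]

theorem extD_add (hθ : DifferentiableAt ℝ θ x) (hω : DifferentiableAt ℝ ω x) (u v : E) :
    extD (fun y => θ y + ω y) x u v = extD θ x u v + extD ω x u v := by
  simp only [extD, fderiv_fun_add hθ hω, add_apply]
  ring

theorem extD_sub (hθ : DifferentiableAt ℝ θ x) (hω : DifferentiableAt ℝ ω x) (u v : E) :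
    extD (fun y => θ y - ω y) x u v = extD θ x u v - extD ω x u v := by
  simp only [extD, fderiv_fun_sub hθ hω, sub_apply]
  ring

theorem extD_smul {g : E → ℝ} (hg : DifferentiableAt ℝ g x) (hθ : DifferentiableAt ℝ θ x)
    (u v : E) :
    extD (fun y => g y • θ y) x u v = wedge (fderiv ℝ g x) (θ x) u v + g x * extD θ x u v := by
  simp only [extD, wedge, fderiv_fun_smul hg hθ, add_apply, smul_apply,
    ContinuousLinearMap.smulRight_apply, smul_eq_mul]
  ring

end ExteriorDerivative

section SixContact

variable (x u v : Fin 8 → ℝ)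

theorem dx8_apply (i : Fin 8) : dx8 i v = v i := rfl

theorem fderiv_coord (i : Fin 8) : fderiv ℝ (fun y : Fin 8 → ℝ => y i) x = dx8 i :=
  (dx8 i).fderiv

theorem extD_eta3b3 : extD eta3b3 x u v = wedge (dx8 0) (dx8 1) u v := by
  unfold eta3b3
  simp (disch := fun_prop) only [↓extD_const, extD_sub, extD_smul]
  simp only [fderiv_coord, wedge, dx8_apply]
  ring

theorem extD_eta3b4 : extD eta3b4 x u v = -x 0 * wedge (dx8 0) (dx8 1) u v := by
  unfold eta3b4
  -- `↓` makes `extD_const` apply to `(1 / 2) • dx8 3` before `extD_smul` can split it.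
  simp (disch := fun_prop) only [↓extD_const, extD_sub, extD_smul]
  simp (disch := fun_prop) only [div_eq_mul_inv, fderiv_mul_const, fderiv_fun_mul, fderiv_fun_sub,
    fderiv_coord]
  simp only [wedge, dx8_apply, add_apply, sub_apply, smul_apply, smul_eq_mul]
  ring

theorem extD_eta3b5 : extD eta3b5 x u v = -x 1 * wedge (dx8 0) (dx8 1) u v := by
  unfold eta3b5
  simp (disch := fun_prop) only [↓extD_const, extD_sub, extD_smul]
  simp (disch := fun_prop) only [div_eq_mul_inv, fderiv_mul_const, fderiv_fun_pow, fderiv_coord]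
  simp only [wedge, dx8_apply, smul_apply, smul_eq_mul, nsmul_eq_mul]
  ring

theorem extD_eta3b6 : extD eta3b6 x u v = x 0 ^ 2 / 2 * wedge (dx8 0) (dx8 1) u v := by
  unfold eta3b6
  simp (disch := fun_prop) only [↓extD_const, extD_add, extD_smul]
  simp (disch := fun_prop) only [div_eq_mul_inv, fderiv_mul_const, fderiv_const_mul,
    fderiv_fun_mul, fderiv_fun_sub, fderiv_fun_add, fderiv_fun_pow, fderiv_coord]
  simp only [wedge, dx8_apply, add_apply, sub_apply, smul_apply, smul_eq_mul, nsmul_eq_mul]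
  ring

theorem extD_eta3b7 : extD eta3b7 x u v = x 0 * x 1 * wedge (dx8 0) (dx8 1) u v := by
  unfold eta3b7
  simp (disch := fun_prop) only [↓extD_const, extD_add, extD_sub, extD_smul]
  simp (disch := fun_prop) only [div_eq_mul_inv, fderiv_mul_const, fderiv_fun_mul, fderiv_fun_sub,
    fderiv_fun_pow, fderiv_coord]
  simp only [wedge, dx8_apply, add_apply, sub_apply, smul_apply, smul_eq_mul, nsmul_eq_mul]
  ring

theorem extD_eta3b8 : extD eta3b8 x u v = x 1 ^ 2 / 2 * wedge (dx8 0) (dx8 1) u v := by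
  unfold eta3b8
  simp (disch := fun_prop) only [↓extD_const, extD_add, extD_smul]
  simp (disch := fun_prop) only [div_eq_mul_inv, fderiv_mul_const, fderiv_fun_neg, fderiv_fun_pow,
    fderiv_coord]
  simp only [wedge, dx8_apply, neg_apply, smul_apply, smul_eq_mul, nsmul_eq_mul]
  ring

/-- The vector field `Y_1`, which spans `ker η_3b` together with `Y_2`. -/
noncomputable def eta3bY₁ (x : Fin 8 → ℝ) : Fin 8 → ℝ :=
  ![1, 0, x 1, x 0 * x 1 - x 2, x 1 ^ 2 / 2,
    (x 0 * (x 0 * x 1 - x 2) - x 3) / 2, x 1 * x 2 - 2 * x 4, x 1 ^ 3 / 6]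

/-- The constant vector field `Y_2`, which spans `ker η_3b` together with `Y_1`. -/
def eta3bY₂ : Fin 8 → ℝ := ![0, 1, 0, 0, 0, 0, 0, 0]

theorem isDualPair_proj_eta3bY : IsDualPair (LinearMap.proj 0) (LinearMap.proj 1)
    (eta3bY₁ x) eta3bY₂ where
  left_left := rfl
  left_right := rfl
  right_left := rfl
  right_right := rfl

theorem eta3b_eq_zero_iff_coord :
    (eta3b3 x v = 0 ∧ eta3b4 x v = 0 ∧ eta3b5 x v = 0 ∧
      eta3b6 x v = 0 ∧ eta3b7 x v = 0 ∧ eta3b8 x v = 0) ↔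
    v 2 = v 0 * x 1 ∧ v 3 = v 0 * (x 0 * x 1 - x 2) ∧ v 4 = v 0 * (x 1 ^ 2 / 2) ∧
      v 5 = v 0 * ((x 0 * (x 0 * x 1 - x 2) - x 3) / 2) ∧ v 6 = v 0 * (x 1 * x 2 - 2 * x 4) ∧
      v 7 = v 0 * (x 1 ^ 3 / 6) := by
  simp only [eta3b3, eta3b4, eta3b5, eta3b6, eta3b7, eta3b8, add_apply, sub_apply, smul_apply,
    smul_eq_mul, dx8_apply]
  constructor
  · rintro ⟨h₃, h₄, h₅, h₆, h₇, h₈⟩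
    have hv₂ : v 2 = v 0 * x 1 := by linear_combination h₃
    have hv₃ : v 3 = v 0 * (x 0 * x 1 - x 2) := by linear_combination -2 * h₄ - x 0 * hv₂
    have hv₄ : v 4 = v 0 * (x 1 ^ 2 / 2) := by linear_combination -h₅
    refine ⟨hv₂, hv₃, hv₄, ?_, ?_, ?_⟩
    · linear_combination 3 * h₆ - x 0 ^ 2 / 2 * hv₂ - x 0 / 2 * hv₃
    · linear_combination 2 * h₇ + x 2 * hv₂ - 2 * x 0 * hv₄
    · linear_combination h₈
  · rintro ⟨hv₂, hv₃, hv₄, hv₅, hv₆, hv₇⟩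
    rw [hv₂, hv₃, hv₄, hv₅, hv₆, hv₇]
    refine ⟨?_, ?_, ?_, ?_, ?_, ?_⟩ <;> ring

theorem eta3b_eq_zero_iff_mem_span :
    (eta3b3 x v = 0 ∧ eta3b4 x v = 0 ∧ eta3b5 x v = 0 ∧
      eta3b6 x v = 0 ∧ eta3b7 x v = 0 ∧ eta3b8 x v = 0) ↔
    v ∈ Submodule.span ℝ {eta3bY₁ x, eta3bY₂} := by
  rw [eta3b_eq_zero_iff_coord, (isDualPair_proj_eta3bY x).mem_span_iff]
  simp [funext_iff, Fin.forall_fin_succ, eta3bY₁, eta3bY₂]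

theorem forall_extD_eta3b_eq_zero_iff_mem_K8 :
    ((∀ u, extD eta3b3 x v u = 0) ∧ (∀ u, extD eta3b4 x v u = 0) ∧
      (∀ u, extD eta3b5 x v u = 0) ∧ (∀ u, extD eta3b6 x v u = 0) ∧
      (∀ u, extD eta3b7 x v u = 0) ∧ (∀ u, extD eta3b8 x v u = 0)) ↔ v ∈ K8 := by
  have hK : (∀ u, wedge (dx8 0) (dx8 1) v u = 0) ↔ v ∈ K8 :=
    (isDualPair_proj_eta3bY x).forall_wedge_eq_zero_iff
  simp only [extD_eta3b3, extD_eta3b4, extD_eta3b5, extD_eta3b6, extD_eta3b7, extD_eta3b8]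
  refine ⟨fun h => hK.mp h.1, fun hv => ?_⟩
  simp [hK.mpr hv]

theorem isCompl_span_eta3bY_K8 : IsCompl (Submodule.span ℝ {eta3bY₁ x, eta3bY₂}) K8 :=
  (isDualPair_proj_eta3bY x).isCompl_span_ker

theorem finrank_K8 : Module.finrank ℝ K8 = 6 := by
  have hsum := Submodule.finrank_add_eq_of_isCompl (isCompl_span_eta3bY_K8 0)
  rw [(isDualPair_proj_eta3bY 0).finrank_span, Module.finrank_fin_fun] at hsum
  lia

end SixContact

/-- **The six-contact form of the degree-three Brockett control system.** The
ℝ^6-valued one-form `η_3b = Σ_{α=3}^8 η^α ⊗ e_α` above is a six-contact form on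
`ℝ^8`: at every point, (a) its kernel is two-dimensional, spanned by
`Y_1 = (1, 0, x_2, x_1x_2 − x_3, x_2²/2, (x_1(x_1x_2 − x_3) − x_4)/2, x_2x_3 − 2x_5, x_2³/6)`
and `Y_2 = (0, 1, 0, 0, 0, 0, 0, 0)`; (b) the joint kernel of `dη^3, …, dη^8`
equals `{v : v_1 = v_2 = 0}`, which is six-dimensional; (c) the two kernels
intersect trivially. -/
theorem stmt_18 : ∀ x : Fin 8 → ℝ,
    ({v : Fin 8 → ℝ | eta3b3 x v = 0 ∧ eta3b4 x v = 0 ∧ eta3b5 x v = 0 ∧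
        eta3b6 x v = 0 ∧ eta3b7 x v = 0 ∧ eta3b8 x v = 0} =
      ↑(Submodule.span ℝ
        ({![1, 0, x 1, x 0 * x 1 - x 2, x 1 ^ 2 / 2,
            (x 0 * (x 0 * x 1 - x 2) - x 3) / 2, x 1 * x 2 - 2 * x 4, x 1 ^ 3 / 6],
          ![0, 1, 0, 0, 0, 0, 0, 0]} : Set (Fin 8 → ℝ)))) ∧
    Module.finrank ℝ
      ↥(Submodule.span ℝ
        ({![1, 0, x 1, x 0 * x 1 - x 2, x 1 ^ 2 / 2,
            (x 0 * (x 0 * x 1 - x 2) - x 3) / 2, x 1 * x 2 - 2 * x 4, x 1 ^ 3 / 6],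
          ![0, 1, 0, 0, 0, 0, 0, 0]} : Set (Fin 8 → ℝ))) = 2 ∧
    ({v : Fin 8 → ℝ | (∀ u, extD eta3b3 x v u = 0) ∧ (∀ u, extD eta3b4 x v u = 0) ∧
        (∀ u, extD eta3b5 x v u = 0) ∧ (∀ u, extD eta3b6 x v u = 0) ∧
        (∀ u, extD eta3b7 x v u = 0) ∧ (∀ u, extD eta3b8 x v u = 0)} = ↑K8) ∧
    Module.finrank ℝ ↥K8 = 6 ∧
    (∀ v : Fin 8 → ℝ,
      eta3b3 x v = 0 → eta3b4 x v = 0 → eta3b5 x v = 0 →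
      eta3b6 x v = 0 → eta3b7 x v = 0 → eta3b8 x v = 0 →
      (∀ u, extD eta3b3 x v u = 0) → (∀ u, extD eta3b4 x v u = 0) →
      (∀ u, extD eta3b5 x v u = 0) → (∀ u, extD eta3b6 x v u = 0) →
      (∀ u, extD eta3b7 x v u = 0) → (∀ u, extD eta3b8 x v u = 0) → v = 0) := by
  intro x
  refine ⟨Set.ext (eta3b_eq_zero_iff_mem_span x), (isDualPair_proj_eta3bY x).finrank_span,
    Set.ext (forall_extD_eta3b_eq_zero_iff_mem_K8 x), finrank_K8, ?_⟩
  intro v h₃ h₄ h₅ h₆ h₇ h₈ hd₃ hd₄ hd₅ hd₆ hd₇ hd₈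
  have hη := (eta3b_eq_zero_iff_mem_span x v).mp ⟨h₃, h₄, h₅, h₆, h₇, h₈⟩
  have hdη := (forall_extD_eta3b_eq_zero_iff_mem_K8 x v).mp ⟨hd₃, hd₄, hd₅, hd₆, hd₇, hd₈⟩
  exact Submodule.disjoint_def.mp (isCompl_span_eta3bY_K8 x).disjoint v hη hdη
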